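/- arXiv:2401.11536 — 3 statements merged into one kernel-verified Lean document; each statement's English description precedes it below -/
import Mathlib

section
/- Let J_x, J_y, J_z > 0 and let B_y, B_z : ℝ → ℝ be differentiable. With f₁(t) = (0, −B_z(t)/J_y, B_y(t)/J_z) and g₁(ω, t) = ((J_y − J_z)(B_y ω_y/J_z − B_z ω_z/J_y)/J_x, Ḃ_z/J_y − B_y ω_x (J_x − J_z)/(J_y J_z), −Ḃ_y/J_z − B_z ω_x (J_x − J_y)/(J_y J_z)), the Lie bracket [g₁, f₁](ω, t) = (∂f₁/∂ω) g₁ − (∂g₁/∂ω) f₁ equals g₃(t) = (2 B_y(t) B_z(t) (J_y − J_z)/(J_x J_y J_z), 0, 0) for every ω and t. -/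
/-!
At fixed `t` the field `f₁` is constant in `ω`, so `∂f₁/∂ω = 0`, while `g₁` is affine in `ω`, so
`∂g₁/∂ω` is its linear part. In that linear part the first component involves only `ω 1`, `ω 2` and
the other two only `ω 0`; since `f₁` has first component `0`, only the first component of
`-(∂g₁/∂ω) f₁` survives, and its two terms are both equal to
`By Bz (Jy - Jz) / (Jx Jy Jz)`.
-/

/-- With `f₁(t) = (0, −Bz(t)/Jy, By(t)/Jz)` and
`g₁(ω, t) = ((Jy−Jz)(By ωy/Jz − Bz ωz/Jy)/Jx, Ḃz/Jy − By ωx (Jx−Jz)/(Jy Jz),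
−Ḃy/Jz − Bz ωx (Jx−Jy)/(Jy Jz))`, the Lie bracket
`[g₁, f₁](ω, t) = (∂f₁/∂ω) g₁ − (∂g₁/∂ω) f₁` equals
`g₃(t) = (2 By Bz (Jy − Jz)/(Jx Jy Jz), 0, 0)` for every `ω` and `t`. -/
theorem stmt_9 (Jx Jy Jz : ℝ) (hJx : 0 < Jx) (hJy : 0 < Jy) (hJz : 0 < Jz)
    (By Bz : ℝ → ℝ) (hBy : Differentiable ℝ By) (hBz : Differentiable ℝ Bz)
    (f1 : ℝ → Fin 3 → ℝ)
    (hf1 : ∀ t : ℝ, f1 t = ![0, -Bz t / Jy, By t / Jz])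
    (g1 : (Fin 3 → ℝ) → ℝ → Fin 3 → ℝ)
    (hg1 : ∀ (ω : Fin 3 → ℝ) (t : ℝ), g1 ω t =
      ![(Jy - Jz) * (By t * ω 1 / Jz - Bz t * ω 2 / Jy) / Jx,
        deriv Bz t / Jy - By t * ω 0 * (Jx - Jz) / (Jy * Jz),
        -(deriv By t) / Jz - Bz t * ω 0 * (Jx - Jy) / (Jy * Jz)]) :
    ∀ (ω : Fin 3 → ℝ) (t : ℝ),
      fderiv ℝ (fun _ : Fin 3 → ℝ => f1 t) ω (g1 ω t)
          - fderiv ℝ (fun w : Fin 3 → ℝ => g1 w t) ω (f1 t)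
        = ![2 * By t * Bz t * (Jy - Jz) / (Jx * Jy * Jz), 0, 0] := by
  intro ω t
  -- The linear part of the affine map `g₁(·, t)`, as a coordinatewise family of functionals.
  let L : Fin 3 → ((Fin 3 → ℝ) →L[ℝ] ℝ) :=
    ![((Jy - Jz) / Jx) • ((By t / Jz) • ContinuousLinearMap.proj 1
        - (Bz t / Jy) • ContinuousLinearMap.proj 2),
      (-(By t * (Jx - Jz) / (Jy * Jz))) • ContinuousLinearMap.proj 0,
      (-(Bz t * (Jx - Jy) / (Jy * Jz))) • ContinuousLinearMap.proj 0]
  let c : Fin 3 → ℝ := ![0, deriv Bz t / Jy, -(deriv By t) / Jz]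
  have hg : (fun w : Fin 3 → ℝ => g1 w t) = fun w => ContinuousLinearMap.pi L w + c := by
    funext w i
    rw [hg1]
    fin_cases i <;> simp [L, c] <;> ring
  have hd : fderiv ℝ (fun w : Fin 3 → ℝ => g1 w t) ω = ContinuousLinearMap.pi L := by
    rw [hg]
    exact ((ContinuousLinearMap.pi L).hasFDerivAt.add_const c).fderiv
  rw [hd, fderiv_const_apply, hf1]
  funext i
  fin_cases i
  · simp [L]
    field_simp
    ring
  · simp [L]
  · simp [L]
end

section
/- Let J_x, J_y, J_z > 0 and let B_y, B_z : ℝ → ℝ be twice differentiable. Let f₀(ω) = ((J_y − J_z) ω_y ω_z / J_x, (J_z − J_x) ω_z ω_x / J_y, (J_x − J_y) ω_x ω_y / J_z) and g₁(ω, t) = ((J_y − J_z)(B_y ω_y/J_z − B_z ω_z/J_y)/J_x, Ḃ_z/J_y − B_y ω_x (J_x − J_z)/(J_y J_z), −Ḃ_y/J_z − B_z ω_x (J_x − J_y)/(J_y J_z)). Then the first component of g₂(ω, t) := ⟨g₁, f₀⟩(ω, t) = [g₁, f₀](ω, t) − ∂g₁/∂t (ω, t) equals −(2 (J_y − J_z)/(J_x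 J_y J_z)) (J_y Ḃ_y(t) ω_y − J_z Ḃ_z(t) ω_z). -/
/-! The matrices of partial derivatives are evaluated one row at a time: since both fields are
differentiable, the first component of a directional derivative is the directional derivative of
the first component, which only involves `ω 1` and `ω 2`. In `[g₁, f₀]` the terms with `By t` and
`Bz t` cancel, leaving `(Jy − Jz)/Jx * (Ḃz ωz/Jy − Ḃy ωy/Jz)`, and `−∂g₁/∂t` contributes the same
amount again, whence the factor `2`. -/

/-- The directional derivative commutes with taking a component; the derivative along the line
`ω + s v` computes it. -/
lemma fderiv_apply_component {F : (Fin 3 → ℝ) → Fin 3 → ℝ} {ω : Fin 3 → ℝ}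
    (hF : DifferentiableAt ℝ F ω) (v : Fin 3 → ℝ) (i : Fin 3) {c : ℝ}
    (h : HasDerivAt (fun s : ℝ => F (ω + s • v) i) c 0) : fderiv ℝ F ω v i = c :=
  (hasDerivAt_pi.1 (hF.hasFDerivAt.hasLineDerivAt v) i).unique h

/-- With drift `f₀` and `g₁` as in the controllability analysis, the first
component of `g₂(ω, t) := ⟨g₁, f₀⟩(ω, t) = [g₁, f₀](ω, t) − ∂g₁/∂t(ω, t)` equals
`−(2 (Jy − Jz)/(Jx Jy Jz)) (Jy Ḃy ωy − Jz Ḃz ωz)`. -/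
theorem stmt_10 (Jx Jy Jz : ℝ) (hJx : 0 < Jx) (hJy : 0 < Jy) (hJz : 0 < Jz)
    (By Bz : ℝ → ℝ)
    (hBy : Differentiable ℝ By) (hBy' : Differentiable ℝ (deriv By))
    (hBz : Differentiable ℝ Bz) (hBz' : Differentiable ℝ (deriv Bz))
    (f0 : (Fin 3 → ℝ) → Fin 3 → ℝ)
    (hf0 : ∀ ω : Fin 3 → ℝ, f0 ω =
      ![(Jy - Jz) * ω 1 * ω 2 / Jx, (Jz - Jx) * ω 2 * ω 0 / Jy, (Jx - Jy) * ω 0 * ω 1 / Jz])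
    (g1 : (Fin 3 → ℝ) → ℝ → Fin 3 → ℝ)
    (hg1 : ∀ (ω : Fin 3 → ℝ) (t : ℝ), g1 ω t =
      ![(Jy - Jz) * (By t * ω 1 / Jz - Bz t * ω 2 / Jy) / Jx,
        deriv Bz t / Jy - By t * ω 0 * (Jx - Jz) / (Jy * Jz),
        -(deriv By t) / Jz - Bz t * ω 0 * (Jx - Jy) / (Jy * Jz)]) :
    ∀ (ω : Fin 3 → ℝ) (t : ℝ),
      (fderiv ℝ f0 ω (g1 ω t) - fderiv ℝ (fun w : Fin 3 → ℝ => g1 w t) ω (f0 ω)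
          - deriv (fun s : ℝ => g1 ω s) t) 0
        = -(2 * (Jy - Jz) / (Jx * Jy * Jz))
            * (Jy * deriv By t * ω 1 - Jz * deriv Bz t * ω 2) := by
  intro ω t
  have hf0d : DifferentiableAt ℝ f0 ω := by
    rw [funext hf0, differentiableAt_pi]
    intro i
    fin_cases i <;> simp <;> fun_prop
  have hg1d : DifferentiableAt ℝ (fun w : Fin 3 → ℝ => g1 w t) ω := by
    rw [funext fun w => hg1 w t, differentiableAt_pi]
    intro i
    fin_cases i <;> simp <;> fun_prop
  have hg1t : DifferentiableAt ℝ (fun s : ℝ => g1 ω s) t := by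
    rw [funext fun s => hg1 ω s, differentiableAt_pi]
    intro i
    fin_cases i <;> simp <;> fun_prop
  have line : ∀ (v : Fin 3 → ℝ) (i : Fin 3),
      HasDerivAt (fun s : ℝ => ω i + s * v i) (v i) 0 := fun v i => by
    simpa using ((hasDerivAt_id (0 : ℝ)).mul_const (v i)).const_add (ω i)
  have e1 : fderiv ℝ f0 ω (g1 ω t) 0
      = (Jy - Jz) * (g1 ω t 1 * ω 2 + ω 1 * g1 ω t 2) / Jx := by
    apply fderiv_apply_component hf0d
    simp only [hf0, Matrix.cons_val_zero, Pi.add_apply, Pi.smul_apply, smul_eq_mul]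
    refine ((((line (g1 ω t) 1).const_mul (Jy - Jz)).mul
      (line (g1 ω t) 2)).div_const Jx).congr_deriv ?_
    ring
  have e2 : fderiv ℝ (fun w : Fin 3 → ℝ => g1 w t) ω (f0 ω) 0
      = (Jy - Jz) * (By t * f0 ω 1 / Jz - Bz t * f0 ω 2 / Jy) / Jx := by
    apply fderiv_apply_component hg1d
    simp only [hg1, Matrix.cons_val_zero, Pi.add_apply, Pi.smul_apply, smul_eq_mul]
    exact (((((line (f0 ω) 1).const_mul (By t)).div_const Jz).sub
      (((line (f0 ω) 2).const_mul (Bz t)).div_const Jy)).const_mul (Jy - Jz)).div_const Jx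
  have e3 : deriv (fun s : ℝ => g1 ω s) t 0
      = (Jy - Jz) * (deriv By t * ω 1 / Jz - deriv Bz t * ω 2 / Jy) / Jx := by
    refine (hasDerivAt_pi.1 hg1t.hasDerivAt 0).unique ?_
    simp only [hg1, Matrix.cons_val_zero]
    exact (((((hBy t).hasDerivAt.mul_const (ω 1)).div_const Jz).sub
      (((hBz t).hasDerivAt.mul_const (ω 2)).div_const Jy)).const_mul (Jy - Jz)).div_const Jx
  rw [Pi.sub_apply, Pi.sub_apply, e1, e2, e3, hg1, hf0]
  simp
  field_simp
  ring
end

section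
/- Let J_x, J_y, J_z > 0 with J_y = J_z, and let B_y, B_z : ℝ → ℝ be twice differentiable. Define f₁(t) = (0, −B_z(t)/J_y, B_y(t)/J_z), g₁ = ⟨f₁, f₀⟩, g₂ = ⟨g₁, f₀⟩, and g₃ = [g₁, f₁], where f₀(ω) = ((J_y − J_z) ω_y ω_z / J_x, (J_z − J_x) ω_z ω_x / J_y, (J_x − J_y) ω_x ω_y / J_z), [ξ, η] = (∂η/∂ω)ξ − (∂ξ/∂ω)η and ⟨ξ, η⟩ = [ξ, η] − ∂ξ/∂t. Then for every ω ∈ ℝ³ and t ∈ ℝ, the first components of f₁(t), g₁(ω, t), g₂(ω, t), and g₃(ω, t) are all zero; consequently the controllability distribution Δ₂ = span{f₁, g₁, g₂, g₃} is contained in the plane {v ∈ ℝ³ : v₁ = 0} and has dimension at most 2 < 3 at every point. Hence J_y ≠ J_z is a necessary condition for the rank-3 local weak controllability condition to hold. -/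
/-!
When `Jy = Jz` the first component of the drift `f0` is identically zero, as is that of the input
field `f1`. A map with values in the plane `{v | v 0 = 0}` has all its derivatives in that plane, so
both brackets preserve the fields tangent to it. Hence all four generators lie in the plane, which
is a proper subspace of a three-dimensional space. No derivative has to be computed, and where
differentiability fails the derivative is zero by convention, which also lies in the plane.
-/

/-- Derivatives of a map into the plane `{v | v 0 = 0}` stay in that plane. -/
lemma fderiv_apply_zero_of_plane {E : Type*} [NormedAddCommGroup E] [NormedSpace ℝ E]
    {h : E → Fin 3 → ℝ} (hh : ∀ w, h w 0 = 0) (x v : E) : fderiv ℝ h x v 0 = 0 := by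
  by_cases hd : DifferentiableAt ℝ h x
  · have h0 := (hasFDerivAt_pi'.1 hd.hasFDerivAt) 0
    simp only [hh] at h0
    have := h0.unique (hasFDerivAt_const (0 : ℝ) x)
    simpa using congrArg (fun L : E →L[ℝ] ℝ => L v) this
  · simp [fderiv_zero_of_not_differentiableAt hd]

lemma deriv_apply_zero_of_plane {h : ℝ → Fin 3 → ℝ} (hh : ∀ w, h w 0 = 0) (t : ℝ) :
    deriv h t 0 = 0 := by
  rw [← fderiv_apply_one_eq_deriv]
  exact fderiv_apply_zero_of_plane hh t 1


/-- If `Jy = Jz`, then with `f₁(t) = (0, −Bz/Jy, By/Jz)`, `g₁ = ⟨f₁, f₀⟩`,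
`g₂ = ⟨g₁, f₀⟩`, `g₃ = [g₁, f₁]` (brackets `[ξ,η] = (∂η/∂ω)ξ − (∂ξ/∂ω)η`,
`⟨ξ,η⟩ = [ξ,η] − ∂ξ/∂t`), the first components of `f₁, g₁, g₂, g₃` all vanish; hence the
controllability distribution `Δ₂ = span{f₁, g₁, g₂, g₃}` lies in the plane `{v : v₁ = 0}` and
has dimension at most `2 < 3`.  So `Jy ≠ Jz` is necessary for the rank-3 condition. -/
theorem stmt_11 (Jx Jy Jz : ℝ) (hJx : 0 < Jx) (hJy : 0 < Jy) (hJz : 0 < Jz) (hyz : Jy = Jz)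
    (By Bz : ℝ → ℝ)
    (hBy : Differentiable ℝ By) (hBy' : Differentiable ℝ (deriv By))
    (hBz : Differentiable ℝ Bz) (hBz' : Differentiable ℝ (deriv Bz))
    (f0 : (Fin 3 → ℝ) → Fin 3 → ℝ)
    (hf0 : ∀ ω : Fin 3 → ℝ, f0 ω =
      ![(Jy - Jz) * ω 1 * ω 2 / Jx, (Jz - Jx) * ω 2 * ω 0 / Jy, (Jx - Jy) * ω 0 * ω 1 / Jz])
    (f1 : ℝ → Fin 3 → ℝ)
    (hf1 : ∀ t : ℝ, f1 t = ![0, -Bz t / Jy, By t / Jz])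
    (g1 g2 g3 : (Fin 3 → ℝ) → ℝ → Fin 3 → ℝ)
    (hg1 : ∀ (ω : Fin 3 → ℝ) (t : ℝ), g1 ω t =
      fderiv ℝ f0 ω (f1 t) - fderiv ℝ (fun _ : Fin 3 → ℝ => f1 t) ω (f0 ω) - deriv f1 t)
    (hg2 : ∀ (ω : Fin 3 → ℝ) (t : ℝ), g2 ω t =
      fderiv ℝ f0 ω (g1 ω t) - fderiv ℝ (fun w : Fin 3 → ℝ => g1 w t) ω (f0 ω)
        - deriv (fun s : ℝ => g1 ω s) t)
    (hg3 : ∀ (ω : Fin 3 → ℝ) (t : ℝ), g3 ω t =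
      fderiv ℝ (fun _ : Fin 3 → ℝ => f1 t) ω (g1 ω t)
        - fderiv ℝ (fun w : Fin 3 → ℝ => g1 w t) ω (f1 t)) :
    ∀ (ω : Fin 3 → ℝ) (t : ℝ),
      f1 t 0 = 0 ∧ g1 ω t 0 = 0 ∧ g2 ω t 0 = 0 ∧ g3 ω t 0 = 0 ∧
      (∀ v ∈ Submodule.span ℝ ({f1 t, g1 ω t, g2 ω t, g3 ω t} : Set (Fin 3 → ℝ)), v 0 = 0) ∧
      Module.finrank ℝ
        ↥(Submodule.span ℝ ({f1 t, g1 ω t, g2 ω t, g3 ω t} : Set (Fin 3 → ℝ))) ≤ 2 := by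
  have F0 : ∀ w, f0 w 0 = 0 := by
    intro w
    simp [hf0, hyz]
  have F1 : ∀ t, f1 t 0 = 0 := by
    intro t
    simp [hf1]
  have G1 : ∀ w t, g1 w t 0 = 0 := by
    intro w t
    rw [hg1, Pi.sub_apply, Pi.sub_apply, fderiv_apply_zero_of_plane F0,
      fderiv_apply_zero_of_plane (fun _ => F1 t), deriv_apply_zero_of_plane F1]
    simp
  intro ω t
  have G2 : g2 ω t 0 = 0 := by
    rw [hg2, Pi.sub_apply, Pi.sub_apply, fderiv_apply_zero_of_plane F0,
      fderiv_apply_zero_of_plane (fun w => G1 w t), deriv_apply_zero_of_plane (G1 ω)]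
    simp
  have G3 : g3 ω t 0 = 0 := by
    rw [hg3, Pi.sub_apply, fderiv_apply_zero_of_plane (fun _ => F1 t),
      fderiv_apply_zero_of_plane (fun w => G1 w t)]
    simp
  have S : ∀ v ∈ Submodule.span ℝ ({f1 t, g1 ω t, g2 ω t, g3 ω t} : Set (Fin 3 → ℝ)),
      v 0 = 0 := by
    have hle : Submodule.span ℝ ({f1 t, g1 ω t, g2 ω t, g3 ω t} : Set (Fin 3 → ℝ)) ≤
        LinearMap.ker (LinearMap.proj (R := ℝ) (φ := fun _ : Fin 3 => ℝ) 0) := by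
      rw [Submodule.span_le]
      rintro v (rfl | rfl | rfl | rfl)
      · exact F1 t
      · exact G1 ω t
      · exact G2
      · exact G3
    exact fun v hv => hle hv
  refine ⟨F1 t, G1 ω t, G2, G3, S, ?_⟩
  have hne : Submodule.span ℝ ({f1 t, g1 ω t, g2 ω t, g3 ω t} : Set (Fin 3 → ℝ)) ≠ ⊤ := by
    intro htop
    have h1 := S (fun _ => 1) (htop ▸ Submodule.mem_top)
    exact one_ne_zero h1
  have hlt := Submodule.finrank_lt hne
  rw [Module.finrank_fin_fun] at hlt
  omega
end
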